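/- arXiv:2010.05881 — 2 statements merged into one kernel-verified Lean document; each statement's English description precedes it below -/
import Mathlib

section
/- Let d ≥ 2 and l > d be integers, let N = (n_{jk}) (j = 1,…,d, k = 1,…,l) be a fixed d×l integer matrix of rank d, and let a > 0. Then the Lebesgue measure of the set {ω⃗ = (ω₁,…,ω_l) ∈ ([−1/2,1/2]^d)^l : |det(θ₁(ω⃗,N),…,θ_d(ω⃗,N))| < a} is strictly less than 2·d·a^{1/d}. -/
open MeasureTheory Set

noncomputable section

/-- `θ_j(ω⃗,N) := ∑_k n_{jk} ω_k`; this is the determinant of the `d×d` matrix whose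
columns are `θ₁,…,θ_d`, i.e. whose `(i,j)` entry is the `i`-th coordinate of `θ_j`. -/
def thetaDet {d l : ℕ} (ω : Fin l → EuclideanSpace ℝ (Fin d))
    (N : Matrix (Fin d) (Fin l) ℤ) : ℝ :=
  Matrix.det (Matrix.of fun i j : Fin d => ∑ k, (N j k : ℝ) * ω k i)

lemma aux_phi (d l : ℕ) :
    MeasurePreserving (fun (ω : Fin l → EuclideanSpace ℝ (Fin d)) (p : Fin l × Fin d) => ω p.1 p.2)
      volume volume := by
  have hm : Measurable (fun (ω : Fin l → EuclideanSpace ℝ (Fin d)) (p : Fin l × Fin d) =>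
      ω p.1 p.2) := by fun_prop
  refine ⟨hm, ?_⟩
  symm
  refine Measure.pi_eq ?_
  intro s hs
  rw [Measure.map_apply hm (MeasurableSet.univ_pi hs)]
  have : (fun (ω : Fin l → EuclideanSpace ℝ (Fin d)) (p : Fin l × Fin d) => ω p.1 p.2) ⁻¹'
      (univ.pi s) = univ.pi (fun k => (WithLp.ofLp : EuclideanSpace ℝ (Fin d) → _) ⁻¹'
        (univ.pi fun i => s (k, i))) := by
    ext ω
    simp [Set.mem_pi]
  rw [this, volume_pi_pi, Fintype.prod_prod_type]
  refine Finset.prod_congr rfl fun k _ => ?_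
  rw [(PiLp.volume_preserving_ofLp (Fin d)).measure_preimage
    (MeasurableSet.univ_pi fun i => hs (k, i)).nullMeasurableSet, volume_pi_pi]

def nuI : Measure ℝ := volume.restrict (Set.Icc (-(1 : ℝ)/2) (1/2))

instance : IsProbabilityMeasure nuI := ⟨by simp [nuI]; norm_num⟩

lemma nuI_le (f h t : ℝ) (hf : f ≠ 0) (c : ℝ) :
    nuI {y | |h + (y - c) * f| < t * |f|} ≤ ENNReal.ofReal (2 * t) := by
  have : {y | |h + (y - c) * f| < t * |f|} ⊆ Set.Ioo (c - h / f - t) (c - h / f + t) := by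
    intro y hy
    simp only [Set.mem_ofPred_eq] at hy
    have e : h + (y - c) * f = (y - (c - h / f)) * f := by field_simp; ring
    rw [e, abs_mul] at hy
    have := lt_of_mul_lt_mul_right hy (abs_nonneg f)
    rw [abs_lt] at this
    constructor <;> linarith
  refine (measure_mono this).trans ?_
  refine (Measure.restrict_apply_le _ _).trans ?_
  rw [Real.volume_Ioo]
  apply le_of_eq; congr 1; ring

lemma aux_step {ι : Type*} [Fintype ι] [DecidableEq ι] (i : ι) (f h : (ι → ℝ) → ℝ)
    (hfm : Measurable f) (hhm : Measurable h)
    (hf : ∀ x y, f (Function.update x i y) = f x)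
    (hh : ∀ x y, h (Function.update x i y) = h x + (y - x i) * f x)
    (s t : ℝ) (hs : 0 < s) :
    Measure.pi (fun _ : ι => nuI) {x | s ≤ |f x| ∧ |h x| < t * |f x|} ≤
      ENNReal.ofReal (2 * t) * Measure.pi (fun _ : ι => nuI) {x | s ≤ |f x|} := by
  have m1 : MeasurableSet {x | s ≤ |f x|} := measurableSet_le measurable_const (by fun_prop)
  have m2 : MeasurableSet {x | s ≤ |f x| ∧ |h x| < t * |f x|} :=
    m1.inter (measurableSet_lt (f := fun x => |h x|) (g := fun x => t * |f x|)
      (by fun_prop) (by fun_prop))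
  rw [← lintegral_indicator_one m1, ← lintegral_indicator_one m2,
    ← lintegral_const_mul _ (measurable_one.indicator m1)]
  refine lintegral_le_of_lmarginal_le {i} (measurable_one.indicator m2)
    ((measurable_one.indicator m1).const_mul _) ?_
  intro x
  rw [lmarginal_singleton, lmarginal_singleton]
  by_cases hx : s ≤ |f x|
  · have e2 : ∀ y, (ENNReal.ofReal (2 * t) * ({x | s ≤ |f x|}.indicator 1
        (Function.update x i y) : ENNReal)) = ENNReal.ofReal (2 * t) := by
      intro y; simp [Set.indicator, hf, hx]
    simp only [e2]
    have e1 : ∀ y, ({x | s ≤ |f x| ∧ |h x| < t * |f x|}.indicator 1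
        (Function.update x i y) : ENNReal) =
        ({y | |h x + (y - x i) * f x| < t * |f x|}.indicator 1 y) := by
      intro y; simp [Set.indicator, hf, hx, hh]
    simp only [e1]
    rw [lintegral_indicator_one (measurableSet_lt (by fun_prop) (by fun_prop))]
    simp only [lintegral_const, measure_univ, mul_one]
    exact nuI_le _ _ _ (by intro h0; rw [h0, abs_zero] at hx; linarith) _
  · simp [Set.indicator, hf, hx]

lemma aux_real_step {ι : Type*} [Fintype ι] [DecidableEq ι] (i : ι) (f h : (ι → ℝ) → ℝ)
    (hfm : Measurable f) (hhm : Measurable h)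
    (hf : ∀ x y, f (Function.update x i y) = f x)
    (hh : ∀ x y, h (Function.update x i y) = h x + (y - x i) * f x)
    (s t : ℝ) (hs : 0 < s) (ht : 0 < t) :
    (Measure.pi (fun _ : ι => nuI)).real {x | |h x| < s * t} ≤
      (Measure.pi (fun _ : ι => nuI)).real {x | |f x| < s} +
      2 * t * (1 - (Measure.pi (fun _ : ι => nuI)).real {x | |f x| < s}) := by
  set μ := Measure.pi (fun _ : ι => nuI)
  have m0 : MeasurableSet {x | |f x| < s} := measurableSet_lt (by fun_prop) (by fun_prop)
  have hc : {x | s ≤ |f x|} = {x | |f x| < s}ᶜ := by ext; simp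
  have h1 := aux_step i f h hfm hhm hf hh s t hs
  have h2 : μ.real {x | s ≤ |f x| ∧ |h x| < t * |f x|} ≤
      2 * t * (1 - μ.real {x | |f x| < s}) := by
    rw [← probReal_compl_eq_one_sub m0, ← hc]
    have := ENNReal.toReal_mono (by finiteness) h1
    rwa [ENNReal.toReal_mul, ENNReal.toReal_ofReal (by positivity)] at this
  have h3 : {x | |h x| < s * t} ⊆
      {x | |f x| < s} ∪ {x | s ≤ |f x| ∧ |h x| < t * |f x|} := by
    intro x hx
    simp only [Set.mem_ofPred_eq] at hx
    by_cases hfx : |f x| < s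
    · exact Or.inl hfx
    · refine Or.inr ⟨not_lt.1 hfx, ?_⟩
      nlinarith [not_lt.1 hfx]
  have := (measureReal_mono h3 (μ := μ)).trans (measureReal_union_le _ _)
  linarith

lemma aux_det {m : ℕ} (M : Matrix (Fin (m+1)) (Fin (m+1)) ℝ) (δ : ℝ) :
    (Matrix.of fun i j => M i j + if i = Fin.last m ∧ j = Fin.last m then δ else 0).det =
      M.det + δ * (M.submatrix Fin.castSucc Fin.castSucc).det := by
  have : (Matrix.of fun i j => M i j + if i = Fin.last m ∧ j = Fin.last m then δ else 0) =
      M.updateRow (Fin.last m) (M (Fin.last m) + δ • Pi.single (Fin.last m) 1) := by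
    ext i j
    by_cases hi : i = Fin.last m
    · subst hi; simp [Pi.single_apply]
    · simp [hi]
  rw [this, Matrix.det_updateRow_add, Matrix.det_updateRow_smul, Matrix.updateRow_eq_self,
    ← Matrix.adjugate_apply, Matrix.adjugate_fin_succ_eq_det_submatrix]
  simp [Fin.succAbove_last, ← two_mul]

/-- leading minors -/
def ldet {d l : ℕ} (A : Matrix (Fin d) (Fin l) ℝ) (m : ℕ) (hm : m ≤ d)
    (x : Fin l × Fin d → ℝ) : ℝ :=
  Matrix.det (Matrix.of fun i j : Fin m =>
    ∑ k, A (Fin.castLE hm i) k * x (k, Fin.castLE hm j))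

lemma ldet_meas {d l : ℕ} (A : Matrix (Fin d) (Fin l) ℝ) (m : ℕ) (hm : m ≤ d) :
    Measurable (ldet A m hm) := by
  apply Continuous.measurable
  unfold ldet
  apply Continuous.matrix_det
  refine continuous_matrix fun i j => ?_
  simp only [Matrix.of_apply]
  fun_prop

lemma upd_sum {d l : ℕ} (A : Matrix (Fin d) (Fin l) ℝ) (σ : Fin d → Fin l)
    (hA : ∀ i j, A i (σ j) = if i = j then 1 else 0) (r i j : Fin d)
    (x : Fin l × Fin d → ℝ) (y : ℝ) :
    ∑ k, A i k * Function.update x (σ r, r) y (k, j) =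
      ∑ k, A i k * x (k, j) + if i = r ∧ j = r then y - x (σ r, r) else 0 := by
  have : ∀ k, A i k * Function.update x (σ r, r) y (k, j) = A i k * x (k, j) +
      if k = σ r then (if i = r ∧ j = r then y - x (σ r, r) else 0) else 0 := by
    intro k
    by_cases hk : k = σ r
    · subst hk
      by_cases hj : j = r
      · subst hj
        by_cases hi : i = j <;> simp [hi, hA]
      · simp [Function.update_apply, hj]
    · simp [Function.update_apply, hk]
  simp [this, Finset.sum_add_distrib]

lemma ldet_bound {d l : ℕ} (A : Matrix (Fin d) (Fin l) ℝ) (σ : Fin d → Fin l)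
    (hA : ∀ i j, A i (σ j) = if i = j then 1 else 0) (t : ℝ) (ht : 0 < t) (ht1 : 2 * t < 1)
    (m : ℕ) (hm : m ≤ d) :
    (Measure.pi (fun _ : Fin l × Fin d => nuI)).real {x | |ldet A m hm x| < t ^ m} ≤
      1 - (1 - 2 * t) ^ m := by
  induction m with
  | zero => simp [ldet]
  | succ m ih =>
    have ih := ih (by omega)
    have hlt : m < d := hm
    have := aux_real_step (σ ⟨m, hlt⟩, ⟨m, hlt⟩) (ldet A m hlt.le) (ldet A (m+1) hm)
      (ldet_meas _ _ _) (ldet_meas _ _ _) ?_ ?_ (t ^ m) t (by positivity) ht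
    · rw [pow_succ, pow_succ]
      nlinarith
    · intro x y
      unfold ldet
      simp only [upd_sum A σ hA]
      congr 1
      ext i j
      have := i.2
      simp [Fin.ext_iff, this.ne]
    · intro x y
      unfold ldet
      simp only [upd_sum A σ hA]
      have := aux_det (Matrix.of fun i j : Fin (m+1) =>
        ∑ k, A (Fin.castLE hm i) k * x (k, Fin.castLE hm j)) (y - x (σ ⟨m, hlt⟩, ⟨m, hlt⟩))
      convert this using 4
      · ext j
        simp [Fin.ext_iff]
      · rfl

lemma exists_minor {d l : ℕ} (N : Matrix (Fin d) (Fin l) ℝ) (hN : N.rank = d) :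
    ∃ σ : Fin d → Fin l, (N.submatrix id σ).det ≠ 0 := by
  obtain ⟨κ, a, ha, hspan, hli⟩ := exists_linearIndependent' ℝ N.col
  have hfin : Finite κ := Finite.of_injective a ha
  have := Fintype.ofFinite κ
  have hc : Fintype.card κ = d := by
    rw [← hN, Matrix.rank_eq_finrank_span_cols, ← hspan, finrank_span_eq_card hli]
  let e : Fin d ≃ κ := (Fintype.equivFinOfCardEq hc).symm
  refine ⟨a ∘ e, ?_⟩
  have h2 : LinearIndependent ℝ (N.submatrix id (a ∘ e)).col := by
    have := hli.comp e e.injective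
    exact this
  rw [Matrix.linearIndependent_cols_iff_isUnit, Matrix.isUnit_iff_isUnit_det] at h2
  exact h2.ne_zero

/-- Let `d ≥ 2`, `l > d`, let `N` be a fixed `d×l` integer matrix of
rank `d`, and let `a > 0`.  Then the Lebesgue measure of the set of frequency vectors
`ω⃗ ∈ ([−1/2,1/2]^d)^l` with `|det(θ₁(ω⃗,N),…,θ_d(ω⃗,N))| < a` is strictly less than
`2·d·a^{1/d}`. -/
theorem measure_small_det_lt (d l : ℕ) (hd : 2 ≤ d) (hl : d < l)
    (N : Matrix (Fin d) (Fin l) ℤ)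
    (hN : (N.map fun z => (z : ℝ)).rank = d)
    (a : ℝ) (ha : 0 < a) :
    volume {ω : Fin l → EuclideanSpace ℝ (Fin d) |
        (∀ k i, ω k i ∈ Set.Icc (-(1 : ℝ)/2) (1/2)) ∧ |thetaDet ω N| < a} <
      ENNReal.ofReal (2 * d * a ^ ((1 : ℝ)/d)) := by
  obtain ⟨σ, hσ⟩ := exists_minor _ hN
  set NR : Matrix (Fin d) (Fin l) ℝ := N.map fun z => (z : ℝ) with hNR
  set B := NR.submatrix id σ with hB
  have hBu : IsUnit B.det := isUnit_iff_ne_zero.2 hσ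
  have hB1 : 1 ≤ |B.det| := by
    have e : B.det = (((N.submatrix id σ).det : ℤ) : ℝ) := by
      rw [Int.cast_det]; rfl
    rw [e] at hσ ⊢
    have : (N.submatrix id σ).det ≠ 0 := by exact_mod_cast hσ
    exact_mod_cast Int.one_le_abs this
  set A := B⁻¹ * NR with hAdef
  have hA : ∀ i j, A i (σ j) = if i = j then 1 else 0 := by
    intro i j
    have : A i (σ j) = (B⁻¹ * B) i j := by simp [hAdef, hB, Matrix.mul_apply]
    rw [this, Matrix.nonsing_inv_mul _ hBu, Matrix.one_apply]
  have hdet : ∀ ω : Fin l → EuclideanSpace ℝ (Fin d),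
      thetaDet ω N = B.det * ldet A d le_rfl (fun p => ω p.1 p.2) := by
    intro ω
    unfold thetaDet ldet
    rw [← Matrix.det_mul, ← Matrix.det_transpose]
    congr 1
    have e : (Matrix.of fun i j : Fin d => ∑ k, A (Fin.castLE le_rfl i) k * ω k (Fin.castLE le_rfl j))
        = A * (Matrix.of fun k i => ω k i) := by
      ext i j; simp [Matrix.mul_apply]
    rw [e, hAdef, ← Matrix.mul_assoc, ← Matrix.mul_assoc, Matrix.mul_nonsing_inv _ hBu,
      Matrix.one_mul]
    ext i j
    simp [Matrix.mul_apply, hNR]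
  set t := a ^ ((1 : ℝ)/d) with htdef
  have ht : 0 < t := Real.rpow_pos_of_pos ha _
  have hd0 : (d : ℝ) ≠ 0 := by positivity
  have hta : t ^ d = a := by
    rw [htdef, ← Real.rpow_natCast, ← Real.rpow_mul ha.le, one_div_mul_cancel hd0, Real.rpow_one]
  set μ := Measure.pi (fun _ : Fin l × Fin d => nuI) with hμ
  have hμ' : μ = volume.restrict (univ.pi fun _ => Set.Icc (-(1 : ℝ)/2) (1/2)) := by
    rw [hμ]; exact (Measure.restrict_pi_pi _ _).symm
  set S := {x : Fin l × Fin d → ℝ | |ldet A d le_rfl x| < t ^ d} with hS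
  have mS : MeasurableSet S := measurableSet_lt (ldet_meas _ _ _).abs measurable_const
  have mC : MeasurableSet (univ.pi fun _ : Fin l × Fin d => Set.Icc (-(1 : ℝ)/2) (1/2)) :=
    MeasurableSet.univ_pi fun _ => measurableSet_Icc
  have hle : volume {ω : Fin l → EuclideanSpace ℝ (Fin d) |
        (∀ k i, ω k i ∈ Set.Icc (-(1 : ℝ)/2) (1/2)) ∧ |thetaDet ω N| < a} ≤ μ S := by
    rw [hμ', Measure.restrict_apply mS,
      ← (aux_phi d l).measure_preimage (mS.inter mC).nullMeasurableSet]
    refine measure_mono ?_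
    rintro ω ⟨h1, h2⟩
    refine ⟨?_, fun p _ => h1 p.1 p.2⟩
    change |ldet A d le_rfl (fun p => ω p.1 p.2)| < t ^ d
    rw [hta]
    rw [hdet, abs_mul] at h2
    nlinarith [abs_nonneg (ldet A d le_rfl (fun p => ω p.1 p.2))]
  refine hle.trans_lt ?_
  have hd2 : (2 : ℝ) ≤ d := by exact_mod_cast hd
  rw [ENNReal.lt_ofReal_iff_toReal_lt (measure_ne_top _ _)]
  change μ.real S < _
  by_cases ht1 : 2 * t < 1
  · have h1 := ldet_bound A σ hA t ht ht1 d le_rfl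
    obtain ⟨e, rfl⟩ : ∃ e, d = e + 1 := ⟨d - 1, by omega⟩
    have h2 := one_add_mul_le_pow (a := -(2 * t)) (by linarith) e
    have h3 : (1 - 2 * t) * (1 + e * (-(2*t))) ≤ (1 - 2 * t) ^ (e+1) := by
      rw [pow_succ', sub_eq_add_neg]
      exact mul_le_mul_of_nonneg_left h2 (by linarith)
    push_cast at hd2 ⊢
    have h4 : 0 < (e:ℝ) * t * t := by
      have : (0:ℝ) < e := by linarith
      positivity
    refine lt_of_le_of_lt h1 ?_
    nlinarith
  · have : μ.real S ≤ 1 := measureReal_le_one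
    nlinarith

end
end

section
/- Suppose the frequency vector ω⃗ satisfies the Strong Diophantine Condition with constants B₀ ∈ (0,1] and μ̂ > 0, and set μ := μ̂ + d + 1. Then there exists a constant C = C(d,l,μ̂,B₀) ≥ 1 such that the following holds for all ρ > 0, L ≥ 1, L̃ ≥ 1, and ξ ∈ ℝ^d with | ‖ξ‖² − ρ² | ≤ L. If ρ² > L + (C·L·L̃^{lμ})², then: (i) s := Rank Υ^ℤ_{L,L̃}(ξ) < d; (ii) the Euclidean diameter of Υ_{L,L̃}(ξ) := {ξ + mω⃗ : m ∈ Υ^ℤ_{L,L̃}(ξ)} is at most C·L·L̃^{sμ}; and (iii) the cardinality of Υ^ℤ_{L,L̃}(ξ) is at most C·L^{s}·L̃^{(s²+1)μ}. -/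
open MeasureTheory Set Metric

noncomputable section

/-- `nω⃗ := ∑_j n_j ω_j ∈ ℝ^d`. -/
def intComb {d l : ℕ} (ω : Fin l → EuclideanSpace ℝ (Fin d)) (n : Fin l → ℤ) :
    EuclideanSpace ℝ (Fin d) :=
  ∑ j, (n j : ℝ) • ω j

/-- `|n| := max_j |n_j|`, as a real number. -/
def supAbs {l : ℕ} (n : Fin l → ℤ) : ℝ :=
  ((Finset.univ.sup fun j => (n j).natAbs : ℕ) : ℝ)

/-- An integer vector viewed as a vector of `ℝ^l`. -/
def intCast {l : ℕ} (m : Fin l → ℤ) : Fin l → ℝ := fun j => (m j : ℝ)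

def starNorm {d l : ℕ} (N : Matrix (Fin d) (Fin l) ℤ) : ℝ :=
  ((∑ j, ∑ k, (N j k).natAbs : ℕ) : ℝ)

/-- The Strong Diophantine Condition with constants `B₀ > 0` and exponent `μhat`. -/
def SDC (d l : ℕ) (ω : Fin l → EuclideanSpace ℝ (Fin d)) (B₀ μhat : ℝ) : Prop :=
  ∀ N : Matrix (Fin d) (Fin l) ℤ, (N.map fun z => (z : ℝ)).rank = d →
    B₀ * starNorm N ^ (-μhat) < |thetaDet ω N|

/-- The resonant set `ℛ(L,ξ) = {m ∈ ℤ^l : | ‖ξ + mω⃗‖² − ρ² | ≤ L}`. -/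
def Res {d l : ℕ} (ω : Fin l → EuclideanSpace ℝ (Fin d)) (ρ L : ℝ)
    (ξ : EuclideanSpace ℝ (Fin d)) : Set (Fin l → ℤ) :=
  {m | |‖ξ + intComb ω m‖ ^ 2 - ρ ^ 2| ≤ L}

/-- `Υ^ℤ_{L,L̃}(ξ)`: integer vectors `(L,L̃)`-conjugate to `0` with respect to `ξ`,
i.e. joined to `0` by a finite chain of consecutively `(L,L̃)`-coupled vectors. -/
def Ups {d l : ℕ} (ω : Fin l → EuclideanSpace ℝ (Fin d)) (ρ L Ltilde : ℝ)
    (ξ : EuclideanSpace ℝ (Fin d)) : Set (Fin l → ℤ) :=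
  {m' | ∃ (k : ℕ) (c : ℕ → (Fin l → ℤ)),
    c 0 = 0 ∧ c k = m' ∧
    (∀ i ≤ k, c i ∈ Res ω ρ L ξ) ∧
    (∀ i < k, supAbs (c (i + 1) - c i) < Ltilde)}


/-- The real-linear extension of `intComb`. -/
def Om {d l : ℕ} (ω : Fin l → EuclideanSpace ℝ (Fin d)) :
    (Fin l → ℝ) →ₗ[ℝ] EuclideanSpace ℝ (Fin d) := Fintype.linearCombination ℝ ω

lemma Om_intCast {d l : ℕ} (ω : Fin l → EuclideanSpace ℝ (Fin d)) (n : Fin l → ℤ) :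
    Om ω (intCast n) = intComb ω n := by
  simp [Om, intComb, intCast, Fintype.linearCombination_apply]

lemma intCast_sub {l : ℕ} (a b : Fin l → ℤ) : intCast (a - b) = intCast a - intCast b := by
  ext j; simp [intCast]

lemma intCast_add {l : ℕ} (a b : Fin l → ℤ) : intCast (a + b) = intCast a + intCast b := by
  ext j; simp [intCast]

lemma intCast_inj {l : ℕ} {a b : Fin l → ℤ} (h : intCast a = intCast b) : a = b := by
  ext j
  have := congrFun h j
  simpa [intCast] using this

lemma intComb_sub {d l : ℕ} (ω : Fin l → EuclideanSpace ℝ (Fin d)) (a b : Fin l → ℤ) :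
    intComb ω (a - b) = intComb ω a - intComb ω b := by
  simp only [← Om_intCast, intCast_sub, map_sub]

lemma abs_le_supAbs {l : ℕ} (n : Fin l → ℤ) (k : Fin l) : |(n k : ℝ)| ≤ supAbs n := by
  have h : (n k).natAbs ≤ Finset.univ.sup fun j => (n j).natAbs :=
    Finset.le_sup (f := fun j => (n j).natAbs) (Finset.mem_univ k)
  have h2 : ((n k).natAbs : ℝ) ≤ supAbs n := by
    unfold supAbs; exact_mod_cast h
  rwa [Nat.cast_natAbs, Int.cast_abs] at h2

lemma supAbs_neg {l : ℕ} (n : Fin l → ℤ) : supAbs (-n) = supAbs n := by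
  simp [supAbs]

lemma norm_om_le {d l : ℕ} {ω : Fin l → EuclideanSpace ℝ (Fin d)}
    (hω : ∀ j i, ω j i ∈ Set.Icc (-(1 : ℝ)/2) (1/2)) (j : Fin l) : ‖ω j‖ ≤ d := by
  rw [EuclideanSpace.norm_eq]
  apply Real.sqrt_le_iff.2
  refine ⟨by positivity, ?_⟩
  calc ∑ i, ‖ω j i‖ ^ 2 ≤ ∑ i : Fin d, (1 : ℝ) := by
        apply Finset.sum_le_sum
        intro i _
        have := hω j i
        rw [Real.norm_eq_abs, sq_abs]
        nlinarith [this.1, this.2]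
    _ = d := by simp
    _ ≤ (d : ℝ) ^ 2 := by
        rcases Nat.eq_zero_or_pos d with h | h
        · subst h; simp
        · have : (1 : ℝ) ≤ d := by exact_mod_cast h
          nlinarith

lemma norm_Om_le {d l : ℕ} {ω : Fin l → EuclideanSpace ℝ (Fin d)}
    (hω : ∀ j i, ω j i ∈ Set.Icc (-(1 : ℝ)/2) (1/2)) (x : Fin l → ℝ) (R : ℝ)
    (hx : ∀ k, |x k| ≤ R) : ‖Om ω x‖ ≤ l * d * R := by
  rw [Om, Fintype.linearCombination_apply]
  calc ‖∑ i, x i • ω i‖ ≤ ∑ i, ‖x i • ω i‖ := norm_sum_le _ _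
    _ ≤ ∑ i : Fin l, R * d := by
        apply Finset.sum_le_sum
        intro i _
        rw [norm_smul, Real.norm_eq_abs]
        have := norm_om_le hω i
        have h0 := abs_nonneg (x i)
        exact mul_le_mul (hx i) this (norm_nonneg _) (h0.trans (hx i))
    _ = l * d * R := by simp; ring

lemma coord_Om_le {d l : ℕ} {ω : Fin l → EuclideanSpace ℝ (Fin d)}
    (hω : ∀ j i, ω j i ∈ Set.Icc (-(1 : ℝ)/2) (1/2)) (x : Fin l → ℝ) (R : ℝ)
    (hx : ∀ k, |x k| ≤ R) (i : Fin d) : |Om ω x i| ≤ l * R := by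
  have : Om ω x i = ∑ k, x k * ω k i := by
    simp [Om, Fintype.linearCombination_apply]
  rw [this]
  calc |∑ k, x k * ω k i| ≤ ∑ k, |x k * ω k i| := Finset.abs_sum_le_sum_abs _ _
    _ ≤ ∑ k : Fin l, R := by
        apply Finset.sum_le_sum
        intro k _
        rw [abs_mul]
        have h1 : |ω k i| ≤ 1 := abs_le.2 ⟨by linarith [(hω k i).1], by linarith [(hω k i).2]⟩
        have h0 := abs_nonneg (x k)
        nlinarith [hx k, abs_nonneg (ω k i)]
    _ = l * R := by simp

lemma ext_indep {l t : ℕ} (n : Fin t → Fin l → ℤ)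
    (h : LinearIndependent ℝ (fun j => intCast (n j))) (e : ℕ) (he : t + e ≤ l) :
    ∃ w : Fin e → Fin l → ℤ,
      LinearIndependent ℝ (fun j : Fin (t + e) => intCast (Fin.append n w j)) ∧
      ∀ j k, |((w j k : ℤ) : ℝ)| ≤ 1 := by
  induction e with
  | zero =>
    refine ⟨Fin.elim0, ?_, fun j => j.elim0⟩
    simpa using h
  | succ e ih =>
    obtain ⟨w, hw, hb⟩ := ih (by omega)
    have hex : ∃ k : Fin l, (Pi.single k 1 : Fin l → ℝ) ∉
        Submodule.span ℝ (Set.range (fun j : Fin (t + e) => intCast (Fin.append n w j))) := by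
      by_contra hcon
      push Not at hcon
      have htop : Submodule.span ℝ
          (Set.range (fun j : Fin (t + e) => intCast (Fin.append n w j))) = ⊤ := by
        rw [eq_top_iff, ← (Pi.basisFun ℝ (Fin l)).span_eq, Submodule.span_le]
        rintro _ ⟨k, rfl⟩
        simpa using hcon k
      have h1 := finrank_span_eq_card hw
      rw [htop] at h1
      simp at h1
      omega
    obtain ⟨k, hk⟩ := hex
    refine ⟨Fin.snoc w (Pi.single k 1), ?_, ?_⟩
    · have h2 : (fun j : Fin (t + (e + 1)) => intCast (Fin.append n (Fin.snoc w (Pi.single k 1) : Fin (e+1) → Fin l → ℤ) j)) =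
          (Fin.snoc (fun j : Fin (t + e) => intCast (Fin.append n w j)) (Pi.single k 1) : Fin (t + e + 1) → Fin l → ℝ) := by
        rw [Fin.append_snoc]
        ext j i
        refine Fin.lastCases ?_ (fun j => ?_) j
        · simp only [Fin.snoc_last]
          simp [intCast, Pi.single_apply]
        · simp only [Fin.snoc_castSucc]
      rw [h2]
      exact linearIndependent_finSnoc.2 ⟨hw, hk⟩
    · intro j i
      refine Fin.lastCases ?_ (fun j => ?_) j
      · simp only [Fin.snoc_last, Pi.single_apply]
        split_ifs <;> simp
      · simpa only [Fin.snoc_castSucc] using hb j i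

lemma thetaDet_eq {d l : ℕ} (ω : Fin l → EuclideanSpace ℝ (Fin d))
    (N : Matrix (Fin d) (Fin l) ℤ) :
    thetaDet ω N = Matrix.det (Matrix.of fun i j : Fin d => Om ω (intCast (N j)) i) := by
  unfold thetaDet
  congr 1
  ext i j
  simp [Om, Fintype.linearCombination_apply, intCast]

lemma det_lower {d l : ℕ} (hd : 1 ≤ d) {ω : Fin l → EuclideanSpace ℝ (Fin d)} {B₀ μhat : ℝ}
    (hB₀ : 0 < B₀) (hμ : 0 < μhat) (h : SDC d l ω B₀ μhat)
    (N : Fin d → Fin l → ℤ) (hN : LinearIndependent ℝ (fun j => intCast (N j)))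
    (R : ℝ) (hR : ∀ j k, |((N j k : ℤ) : ℝ)| ≤ R) :
    B₀ * (d * l * R) ^ (-μhat) <
      |Matrix.det (Matrix.of fun i j : Fin d => Om ω (intCast (N j)) i)| := by
  have hrank : ((Matrix.of N).map fun z => (z : ℝ)).rank = d := by
    have : LinearIndependent ℝ ((Matrix.of N).map fun z => (z : ℝ)).row := hN
    simpa using this.rank_matrix
  have := h (Matrix.of N) hrank
  rw [thetaDet_eq] at this
  refine lt_of_le_of_lt ?_ this
  have hle : starNorm (Matrix.of N) ≤ d * l * R := by
    unfold starNorm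
    push_cast
    calc ∑ j : Fin d, ∑ k : Fin l, (((Matrix.of N) j k).natAbs : ℝ)
        ≤ ∑ j : Fin d, ∑ k : Fin l, R := by
          apply Finset.sum_le_sum; intro j _
          apply Finset.sum_le_sum; intro k _
          have := hR j k
          rwa [Nat.cast_natAbs, Int.cast_abs]
      _ = d * l * R := by simp; ring
  have hpos : 0 < starNorm (Matrix.of N) := by
    have h0 : 0 ≤ starNorm (Matrix.of N) := by unfold starNorm; positivity
    rcases h0.lt_or_eq with h1 | h1
    · exact h1
    · exfalso
      have h2 : (∑ j, ∑ k, ((Matrix.of N) j k).natAbs : ℕ) = 0 := by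
        unfold starNorm at h1; exact_mod_cast h1.symm
      have h3 : ∀ j k, N j k = 0 := by
        intro j k
        have h4 := (Finset.sum_eq_zero_iff.1 h2) j (Finset.mem_univ _)
        have h5 := (Finset.sum_eq_zero_iff.1 h4) k (Finset.mem_univ _)
        simpa using h5
      apply hN.ne_zero ⟨0, hd⟩
      ext k
      simp [intCast, h3]
  have := Real.rpow_le_rpow_of_nonpos hpos hle (by linarith : -μhat ≤ 0)
  nlinarith

lemma cramer_bound {d l : ℕ} (hd : 1 ≤ d) {ω : Fin l → EuclideanSpace ℝ (Fin d)} {B₀ μhat : ℝ}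
    (hω : ∀ j i, ω j i ∈ Set.Icc (-(1 : ℝ)/2) (1/2))
    (hB₀ : 0 < B₀) (hμ : 0 < μhat) (hl : d < l) (h : SDC d l ω B₀ μhat)
    (N : Fin d → Fin l → ℤ) (hN : LinearIndependent ℝ (fun j => intCast (N j)))
    (R : ℝ) (hR1 : 1 ≤ R) (hR : ∀ j k, |((N j k : ℤ) : ℝ)| ≤ R) (c : Fin d → ℝ) (j : Fin d) :
    |c j| ≤ (d.factorial * (l * R) ^ (d - 1) * (d * l * R) ^ μhat / B₀) *
      ‖∑ j, c j • Om ω (intCast (N j))‖ := by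
  set M : Matrix (Fin d) (Fin d) ℝ := Matrix.of fun i j : Fin d => Om ω (intCast (N j)) i with hM
  set u := ∑ j, c j • Om ω (intCast (N j)) with hu
  have hdet := det_lower hd hB₀ hμ h N hN R hR
  rw [← hM] at hdet
  have hMc : M.mulVec c = fun i => u i := by
    ext i
    simp [hu, hM, Matrix.mulVec, dotProduct, mul_comm]
  have hcr : (M.updateCol j (fun i => u i)).det = M.det * c j := by
    rw [← Matrix.cramer_apply, ← hMc, Matrix.cramer_eq_adjugate_mulVec, Matrix.mulVec_mulVec,
      Matrix.adjugate_mul]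
    simp [Matrix.smul_mulVec]
  have hup : |(M.updateCol j (fun i => u i)).det| ≤ d.factorial * ((l * R) ^ (d - 1) * ‖u‖) := by
    rw [Matrix.det_apply]
    calc _ ≤ ∑ σ : Equiv.Perm (Fin d), |Equiv.Perm.sign σ • ∏ i, M.updateCol j (fun i => u i) (σ i) i| :=
          Finset.abs_sum_le_sum_abs _ _
      _ ≤ ∑ σ : Equiv.Perm (Fin d), ((l * R) ^ (d - 1) * ‖u‖) := by
          apply Finset.sum_le_sum
          intro σ _
          have e1 : |Equiv.Perm.sign σ • ∏ i, M.updateCol j (fun i => u i) (σ i) i| =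
              ∏ i, |M.updateCol j (fun i => u i) (σ i) i| := by
            rw [← Finset.abs_prod]
            rcases Int.units_eq_one_or (Equiv.Perm.sign σ) with hs | hs <;> rw [hs] <;> simp
          rw [e1, ← Finset.prod_erase_mul _ _ (Finset.mem_univ j)]
          apply mul_le_mul
          · calc _ ≤ ∏ i ∈ Finset.univ.erase j, ((l : ℝ) * R) := by
                  apply Finset.prod_le_prod
                  · intro i _; positivity
                  · intro i hi
                    rw [Matrix.updateCol_ne (Finset.ne_of_mem_erase hi)]
                    exact coord_Om_le hω _ R (fun k => hR i k) _
              _ = _ := by simp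
          · simp only [Matrix.updateCol_self]
            exact PiLp.norm_apply_le u (σ j)
          · positivity
          · positivity
      _ = _ := by simp [Fintype.card_perm]
  rw [hcr, abs_mul] at hup
  have hl0 : (0 : ℝ) < l := by exact_mod_cast (by omega : 0 < l)
  have hd0 : (0 : ℝ) < d := by exact_mod_cast hd
  have hpos : 0 < (d * l * R : ℝ) := by positivity
  rw [Real.rpow_neg hpos.le] at hdet
  have hX : 0 < (d * l * R : ℝ) ^ μhat := Real.rpow_pos_of_pos hpos _
  set X := (d * l * R : ℝ) ^ μhat
  have h3 : B₀ * X⁻¹ * |c j| ≤ d.factorial * ((l * R) ^ (d - 1) * ‖u‖) :=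
    (mul_le_mul_of_nonneg_right hdet.le (abs_nonneg _)).trans hup
  calc |c j| = (X / B₀) * (B₀ * X⁻¹ * |c j|) := by field_simp
    _ ≤ (X / B₀) * (d.factorial * ((l * R) ^ (d - 1) * ‖u‖)) := by gcongr
    _ = _ := by ring

/-- Constant in the coefficient bound. -/
def K3 (d l : ℕ) (B₀ μhat : ℝ) : ℝ := d.factorial * l ^ (d - 1) * (d * l) ^ μhat / B₀

lemma coeff_bound {d l t : ℕ} (hd : 1 ≤ d) {ω : Fin l → EuclideanSpace ℝ (Fin d)} {B₀ μhat : ℝ}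
    (hω : ∀ j i, ω j i ∈ Set.Icc (-(1 : ℝ)/2) (1/2))
    (hB₀ : 0 < B₀) (hμ : 0 < μhat) (hl : d < l) (h : SDC d l ω B₀ μhat) (ht : t ≤ d)
    (n : Fin t → Fin l → ℤ) (hn : LinearIndependent ℝ (fun j => intCast (n j)))
    (R : ℝ) (hR1 : 1 ≤ R) (hR : ∀ j k, |((n j k : ℤ) : ℝ)| ≤ R) (c : Fin t → ℝ) (j : Fin t) :
    |c j| ≤ K3 d l B₀ μhat * R ^ ((d : ℝ) - 1 + μhat) *
      ‖∑ j, c j • Om ω (intCast (n j))‖ := by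
  obtain ⟨e, rfl⟩ := Nat.exists_eq_add_of_le ht
  obtain ⟨w, hw, hb⟩ := ext_indep n hn e hl.le
  have key := cramer_bound hd hω hB₀ hμ hl h (Fin.append n w) hw R hR1 (by
    intro j k
    refine Fin.addCases (fun j => ?_) (fun j => ?_) j
    · simpa using hR j k
    · simpa using (hb j k).trans hR1) (Fin.append c 0) (Fin.castAdd e j)
  rw [Fin.sum_univ_add] at key
  simp only [Fin.append_left, Fin.append_right, Pi.zero_apply, zero_smul,
    Finset.sum_const_zero, add_zero] at key
  refine key.trans (le_of_eq ?_)
  congr 1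
  unfold K3
  have hl0 : (0 : ℝ) ≤ l := by positivity
  have hR0 : 0 < R := by linarith
  rw [Real.mul_rpow (by positivity) hR0.le, mul_pow, Real.rpow_add hR0]
  have : R ^ (((t + e : ℕ) : ℝ) - 1) = R ^ (t + e - 1) := by
    rw [← Real.rpow_natCast, Nat.cast_sub hd]; simp
  rw [this]
  ring

lemma inner_bound {d l t : ℕ} (hd : 1 ≤ d) {ω : Fin l → EuclideanSpace ℝ (Fin d)} {B₀ μhat : ℝ}
    (hω : ∀ j i, ω j i ∈ Set.Icc (-(1 : ℝ)/2) (1/2))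
    (hB₀ : 0 < B₀) (hμ : 0 < μhat) (hl : d < l) (h : SDC d l ω B₀ μhat) (ht : t ≤ d)
    (n : Fin t → Fin l → ℤ) (hn : LinearIndependent ℝ (fun j => intCast (n j)))
    (R : ℝ) (hR1 : 1 ≤ R) (hR : ∀ j k, |((n j k : ℤ) : ℝ)| ≤ R)
    (x : EuclideanSpace ℝ (Fin d)) (A : ℝ) (hA0 : 0 ≤ A)
    (hA : ∀ j, |inner ℝ x (Om ω (intCast (n j)))| ≤ A)
    (c : Fin t → ℝ) :
    |inner ℝ x (∑ j, c j • Om ω (intCast (n j)))| ≤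
      d * K3 d l B₀ μhat * A * R ^ ((d : ℝ) - 1 + μhat) *
      ‖∑ j, c j • Om ω (intCast (n j))‖ := by
  set u := ∑ j, c j • Om ω (intCast (n j)) with hu
  have hc := coeff_bound hd hω hB₀ hμ hl h ht n hn R hR1 hR c
  rw [← hu] at hc
  have hK : 0 ≤ K3 d l B₀ μhat * R ^ ((d : ℝ) - 1 + μhat) * ‖u‖ := by
    unfold K3; positivity
  calc |inner ℝ x u| = |∑ j, c j * inner ℝ x (Om ω (intCast (n j)))| := by
        rw [hu, inner_sum]; simp [inner_smul_right]
    _ ≤ ∑ j, |c j * inner ℝ x (Om ω (intCast (n j)))| := Finset.abs_sum_le_sum_abs _ _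
    _ ≤ ∑ j : Fin t, (K3 d l B₀ μhat * R ^ ((d : ℝ) - 1 + μhat) * ‖u‖) * A := by
        apply Finset.sum_le_sum
        intro j _
        rw [abs_mul]
        exact mul_le_mul (hc j) (hA j) (abs_nonneg _) hK
    _ = t * ((K3 d l B₀ μhat * R ^ ((d : ℝ) - 1 + μhat) * ‖u‖) * A) := by simp
    _ ≤ d * ((K3 d l B₀ μhat * R ^ ((d : ℝ) - 1 + μhat) * ‖u‖) * A) := by
        have : (t : ℝ) ≤ d := by exact_mod_cast ht
        gcongr
    _ = _ := by ring

/-- Coupled steps whose direction lies in `V`. -/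
def Stp {d l : ℕ} (ω : Fin l → EuclideanSpace ℝ (Fin d)) (ρ L Lt : ℝ)
    (ξ : EuclideanSpace ℝ (Fin d)) (V : Submodule ℝ (Fin l → ℝ)) (x y : Fin l → ℤ) : Prop :=
  x ∈ Res ω ρ L ξ ∧ y ∈ Res ω ρ L ξ ∧ supAbs (y - x) < Lt ∧ intCast (y - x) ∈ V

/-- Reachability by coupled steps in `V`. -/
def Rch {d l : ℕ} (ω : Fin l → EuclideanSpace ℝ (Fin d)) (ρ L Lt : ℝ)
    (ξ : EuclideanSpace ℝ (Fin d)) (V : Submodule ℝ (Fin l → ℝ)) (x y : Fin l → ℤ) : Prop :=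
  Relation.ReflTransGen (Stp ω ρ L Lt ξ V) x y

section
variable {d l : ℕ} {ω : Fin l → EuclideanSpace ℝ (Fin d)} {ρ L Lt : ℝ}
    {ξ : EuclideanSpace ℝ (Fin d)} {V W : Submodule ℝ (Fin l → ℝ)}

lemma Stp_symm {x y : Fin l → ℤ} (h : Stp ω ρ L Lt ξ V x y) : Stp ω ρ L Lt ξ V y x := by
  obtain ⟨h1, h2, h3, h4⟩ := h
  refine ⟨h2, h1, ?_, ?_⟩
  · rw [← neg_sub, supAbs_neg]; exact h3
  · have : intCast (x - y) = -intCast (y - x) := by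
      rw [intCast_sub, intCast_sub]; abel
    rw [this]; exact V.neg_mem h4

lemma Rch_symm {x y : Fin l → ℤ} (h : Rch ω ρ L Lt ξ V x y) : Rch ω ρ L Lt ξ V y x := by
  have : Std.Symm (Stp ω ρ L Lt ξ V) := ⟨fun _ _ h => Stp_symm h⟩
  exact Std.Symm.symm (r := Relation.ReflTransGen (Stp ω ρ L Lt ξ V)) _ _ h

lemma Rch_mem {x y : Fin l → ℤ} (h : Rch ω ρ L Lt ξ V x y) : intCast (y - x) ∈ V := by
  induction h with
  | refl => 
    have : intCast (x - x) = 0 := by rw [intCast_sub, sub_self]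
    rw [this]; exact V.zero_mem
  | tail _ h2 ih =>
    rename_i b c _
    have : intCast (c - x) = intCast (b - x) + intCast (c - b) := by
      simp only [intCast_sub]; abel
    rw [this]; exact V.add_mem ih h2.2.2.2

lemma Rch_res {x y : Fin l → ℤ} (hx : x ∈ Res ω ρ L ξ) (h : Rch ω ρ L Lt ξ V x y) :
    y ∈ Res ω ρ L ξ := by
  induction h with
  | refl => exact hx
  | tail _ h2 _ => exact h2.2.1

lemma Ups_Rch (hV : intCast '' Ups ω ρ L Lt ξ ⊆ V) {m : Fin l → ℤ}
    (hm : m ∈ Ups ω ρ L Lt ξ) : Rch ω ρ L Lt ξ V 0 m := by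
  obtain ⟨k, c, h0, hk, hres, hst⟩ := hm
  have hU : ∀ i ≤ k, c i ∈ Ups ω ρ L Lt ξ := fun i hi =>
    ⟨i, c, h0, rfl, fun j hj => hres j (hj.trans hi), fun j hj => hst j (hj.trans_le hi)⟩
  have : ∀ i ≤ k, Rch ω ρ L Lt ξ V 0 (c i) := by
    intro i
    induction i with
    | zero => intro _; rw [h0]; exact Relation.ReflTransGen.refl
    | succ i ih =>
      intro hi
      refine (ih (by omega)).tail ⟨hres i (by omega), hres _ hi, hst i (by omega), ?_⟩
      rw [intCast_sub]
      exact V.sub_mem (hV ⟨_, hU _ hi, rfl⟩) (hV ⟨_, hU i (by omega), rfl⟩)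
  rw [← hk]; exact this k le_rfl

/-- Steps along which `ξ + mω` has small component. -/
def Good (ω : Fin l → EuclideanSpace ℝ (Fin d)) (Lt : ℝ)
    (ξ : EuclideanSpace ℝ (Fin d)) (V : Submodule ℝ (Fin l → ℝ)) (A : ℝ) (m : Fin l → ℤ) :
    Set (Fin l → ℤ) :=
  {n | supAbs n < Lt ∧ intCast n ∈ V ∧ |inner ℝ (ξ + intComb ω m) (intComb ω n)| ≤ A}

lemma Good_span_le (A : ℝ) (m : Fin l → ℤ) :
    Submodule.span ℝ (intCast '' Good ω Lt ξ V A m) ≤ V := by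
  rw [Submodule.span_le]
  rintro _ ⟨n, hn, rfl⟩
  exact hn.2.1

lemma res_inner {x y : Fin l → ℤ} (hx : x ∈ Res ω ρ L ξ) (hy : y ∈ Res ω ρ L ξ) :
    |inner ℝ (ξ + intComb ω x) (intComb ω (y - x))| ≤ L + ‖intComb ω (y - x)‖ ^ 2 / 2 := by
  unfold Res at hx hy
  simp only [Set.mem_ofPred_eq] at hx hy
  have e : ξ + intComb ω y = (ξ + intComb ω x) + intComb ω (y - x) := by
    rw [intComb_sub]; abel
  rw [e, norm_add_sq_real] at hy
  rw [abs_le] at *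
  have := sq_nonneg ‖intComb ω (y - x)‖
  constructor <;> linarith [hx.1, hx.2, hy.1, hy.2]

lemma close_lemma (hω : ∀ j i, ω j i ∈ Set.Icc (-(1 : ℝ)/2) (1/2)) (hLt : 1 ≤ Lt)
    {A Δ : ℝ} {m : Fin l → ℤ} (hΔ0 : 0 ≤ Δ)
    (hA : L + (l * d * Lt) ^ 2 / 2 + Δ * (l * d * Lt) ≤ A)
    (hW : W = Submodule.span ℝ (intCast '' Good ω Lt ξ V A m))
    (hΔ : ∀ b, Rch ω ρ L Lt ξ W m b → ‖intComb ω (b - m)‖ ≤ Δ)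
    {b : Fin l → ℤ} (hb : Rch ω ρ L Lt ξ V m b) : Rch ω ρ L Lt ξ W m b := by
  induction hb with
  | refl => exact Relation.ReflTransGen.refl
  | tail _ h2 ih =>
    rename_i b c _
    obtain ⟨r1, r2, r3, r4⟩ := h2
    refine ih.tail ⟨r1, r2, r3, ?_⟩
    rw [hW]
    apply Submodule.subset_span
    refine ⟨_, ⟨r3, r4, ?_⟩, rfl⟩
    have hn : ‖intComb ω (c - b)‖ ≤ l * d * Lt := by
      rw [← Om_intCast]
      exact norm_Om_le hω _ _ (fun k => (abs_le_supAbs _ k).trans r3.le)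
    have h1 := res_inner r1 r2
    have h3 : inner ℝ (ξ + intComb ω m) (intComb ω (c - b)) =
        inner ℝ (ξ + intComb ω b) (intComb ω (c - b)) -
        inner ℝ (intComb ω (b - m)) (intComb ω (c - b)) := by
      rw [← inner_sub_left, intComb_sub ω b m]; congr 1; abel
    have h4 : |inner ℝ (intComb ω (b - m)) (intComb ω (c - b))| ≤ Δ * (l * d * Lt) :=
      (abs_real_inner_le_norm _ _).trans (mul_le_mul (hΔ b ih) hn (norm_nonneg _) hΔ0)
    have h5 : ‖intComb ω (c - b)‖ ^ 2 ≤ (l * d * Lt) ^ 2 := by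
      have := norm_nonneg (intComb ω (c - b)); gcongr
    rw [h3]
    refine (abs_sub _ _).trans ?_
    linarith

lemma good_basis {A : ℝ} {m : Fin l → ℤ}
    (hV : Submodule.span ℝ (intCast '' Good ω Lt ξ V A m) = V) :
    ∃ n : Fin (Module.finrank ℝ V) → Fin l → ℤ, (∀ i, n i ∈ Good ω Lt ξ V A m) ∧
      Submodule.span ℝ (Set.range fun i => intCast (n i)) = V ∧
      LinearIndependent ℝ (fun i => intCast (n i)) := by
  have hex := Submodule.exists_fun_fin_finrank_span_eq ℝ (intCast '' Good ω Lt ξ V A m)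
  rw [hV] at hex
  obtain ⟨f, hf1, hf2, hf3⟩ := hex
  choose n hn1 hn2 using hf1
  have : f = fun i => intCast (n i) := by ext1 i; exact (hn2 i).symm
  rw [this] at hf2 hf3
  exact ⟨n, hn1, hf2, hf3⟩

lemma good_lemma (hd : 1 ≤ d) {B₀ μhat : ℝ}
    (hω : ∀ j i, ω j i ∈ Set.Icc (-(1 : ℝ)/2) (1/2))
    (hB₀ : 0 < B₀) (hμ : 0 < μhat) (hl : d < l) (h : SDC d l ω B₀ μhat) (hLt : 1 ≤ Lt)
    {A D : ℝ} {m : Fin l → ℤ} (hA0 : 0 ≤ A) (hD0 : 0 ≤ D)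
    (hD : d * K3 d l B₀ μhat * A * Lt ^ ((d : ℝ) - 1 + μhat) ≤ D)
    (hbig : D ^ 2 < ρ ^ 2 - L) (hm : m ∈ Res ω ρ L ξ)
    (hV : Submodule.span ℝ (intCast '' Good ω Lt ξ V A m) = V) :
    Module.finrank ℝ V < d ∧
      ∀ u ∈ V, |inner ℝ (ξ + intComb ω m) (Om ω u)| ≤ D * ‖Om ω u‖ := by
  obtain ⟨n, hn1, hn2, hn3⟩ := good_basis hV
  have hR : ∀ j k, |((n j k : ℤ) : ℝ)| ≤ Lt := fun j k =>
    (abs_le_supAbs _ k).trans (hn1 j).1.le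
  have hin : ∀ j, |inner ℝ (ξ + intComb ω m) (Om ω (intCast (n j)))| ≤ A := by
    intro j; rw [Om_intCast]; exact (hn1 j).2.2
  have hlt : Module.finrank ℝ V < d := by
    by_contra hcon
    push Not at hcon
    set n' : Fin d → Fin l → ℤ := fun j => n (Fin.castLE hcon j) with hn'
    have hind : LinearIndependent ℝ (fun j => intCast (n' j)) :=
      hn3.comp (Fin.castLE hcon) (Fin.castLE_injective hcon)
    have hvind : LinearIndependent ℝ (fun j => Om ω (intCast (n' j))) := by
      rw [Fintype.linearIndependent_iff]
      intro g hg j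
      have := coeff_bound hd hω hB₀ hμ hl h le_rfl n' hind Lt hLt (fun j k => hR _ k) g j
      rw [hg, norm_zero, mul_zero] at this
      exact abs_eq_zero.1 (le_antisymm this (abs_nonneg _))
    have htop := hvind.span_eq_top_of_card_eq_finrank' (by simp)
    have hx : ξ + intComb ω m ∈ Submodule.span ℝ (Set.range fun j => Om ω (intCast (n' j))) := by
      rw [htop]; trivial
    obtain ⟨c, hc⟩ := (Submodule.mem_span_range_iff_exists_fun ℝ).1 hx
    have := inner_bound hd hω hB₀ hμ hl h le_rfl n' hind Lt hLt (fun j k => hR _ k)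
      (ξ + intComb ω m) A hA0 (fun j => hin _) c
    rw [hc, real_inner_self_eq_norm_sq, abs_of_nonneg (by positivity)] at this
    have hm' := hm
    unfold Res at hm'
    simp only [Set.mem_ofPred_eq] at hm'
    rw [abs_le] at hm'
    set y := ‖ξ + intComb ω m‖
    have hy : 0 ≤ y := norm_nonneg _
    have h1 : y ^ 2 ≤ D * y := this.trans (by gcongr)
    have h2 : y ≤ D := by
      by_contra hc; push Not at hc; nlinarith
    nlinarith
  refine ⟨hlt, ?_⟩
  intro u hu
  rw [← hn2] at hu
  obtain ⟨c, hc⟩ := (Submodule.mem_span_range_iff_exists_fun ℝ).1 hu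
  have := inner_bound hd hω hB₀ hμ hl h hlt.le n hn3 Lt hLt hR
      (ξ + intComb ω m) A hA0 hin c
  have e : Om ω u = ∑ j, c j • Om ω (intCast (n j)) := by
    rw [← hc]; simp
  rw [e]
  exact this.trans (by gcongr)

lemma diam_lemma (hd : 1 ≤ d) {B₀ μhat : ℝ}
    (hω : ∀ j i, ω j i ∈ Set.Icc (-(1 : ℝ)/2) (1/2))
    (hB₀ : 0 < B₀) (hμ : 0 < μhat) (hl : d < l) (h : SDC d l ω B₀ μhat) (hLt : 1 ≤ Lt)
    (hL : 1 ≤ L) (D : ℕ → ℝ) (hD0 : ∀ t, 0 ≤ D t) (hmono : ∀ t, D t ≤ D (t + 1))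
    (hstep : ∀ t, d * K3 d l B₀ μhat * (L + (l * d * Lt) ^ 2 / 2 + 2 * D t * (l * d * Lt)) *
      Lt ^ ((d : ℝ) - 1 + μhat) ≤ D (t + 1))
    (hbig : ∀ t ≤ l, D t ^ 2 < ρ ^ 2 - L) (t : ℕ) (ht : t ≤ l) :
    ∀ (V : Submodule ℝ (Fin l → ℝ)), Module.finrank ℝ V ≤ t → ∀ m ∈ Res ω ρ L ξ, ∀ b,
      Rch ω ρ L Lt ξ V m b → ‖intComb ω (b - m)‖ ≤ 2 * D t := by
  induction t with
  | zero =>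
    intro V hV m _ b hb
    have h1 := Rch_mem hb
    have h2 : V = ⊥ := Submodule.finrank_eq_zero.1 (by omega)
    rw [h2, Submodule.mem_bot] at h1
    rw [← Om_intCast, h1]
    simpa using hD0 0
  | succ t ih =>
    have ih := ih (by omega)
    intro V hV
    set A := L + (l * d * Lt) ^ 2 / 2 + 2 * D t * (l * d * Lt) with hA
    have hA0 : 0 ≤ A := by have := hD0 t; positivity
    -- the degenerate case
    have deg : ∀ m ∈ Res ω ρ L ξ, ∀ b, Rch ω ρ L Lt ξ V m b →
        Submodule.span ℝ (intCast '' Good ω Lt ξ V A m) ≠ V →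
        ‖intComb ω (b - m)‖ ≤ 2 * D (t + 1) := by
      intro m hm b hb hne
      have hlt : Submodule.span ℝ (intCast '' Good ω Lt ξ V A m) < V :=
        lt_of_le_of_ne (Good_span_le A m) hne
      have hf := Submodule.finrank_lt_finrank_of_lt hlt
      have hW := ih _ (by omega : Module.finrank ℝ
        (Submodule.span ℝ (intCast '' Good ω Lt ξ V A m)) ≤ t) m hm
      have := hW b (close_lemma hω hLt (by have := hD0 t; positivity) hA.ge rfl hW hb)
      linarith [hmono t]
    intro m hm b hb
    have hbr := Rch_res hm hb
    by_cases h1 : Submodule.span ℝ (intCast '' Good ω Lt ξ V A m) = V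
    · by_cases h2 : Submodule.span ℝ (intCast '' Good ω Lt ξ V A b) = V
      · have g1 := (good_lemma hd hω hB₀ hμ hl h hLt hA0 (hD0 _) (hstep t) (hbig _ ht) hm h1).2
          _ (Rch_mem hb)
        have g2 := (good_lemma hd hω hB₀ hμ hl h hLt hA0 (hD0 _) (hstep t) (hbig _ ht) hbr h2).2
          _ (Rch_mem hb)
        rw [Om_intCast] at g1 g2
        have e : ‖intComb ω (b - m)‖ ^ 2 = inner ℝ (ξ + intComb ω b) (intComb ω (b - m)) -
            inner ℝ (ξ + intComb ω m) (intComb ω (b - m)) := by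
          rw [← inner_sub_left, ← real_inner_self_eq_norm_sq]
          congr 1
          rw [intComb_sub]; abel
        rw [abs_le] at g1 g2
        set y := ‖intComb ω (b - m)‖
        have hy : 0 ≤ y := norm_nonneg _
        have := hD0 (t + 1)
        by_contra hc; push Not at hc; nlinarith
      · have := deg b hbr m (Rch_symm hb) h2
        rwa [intComb_sub, norm_sub_rev, ← intComb_sub] at this
    · exact deg m hm b hb h1

lemma rank_lemma (hd : 1 ≤ d) {B₀ μhat : ℝ}
    (hω : ∀ j i, ω j i ∈ Set.Icc (-(1 : ℝ)/2) (1/2))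
    (hB₀ : 0 < B₀) (hμ : 0 < μhat) (hl : d < l) (h : SDC d l ω B₀ μhat) (hLt : 1 ≤ Lt)
    (hL : 1 ≤ L) (D : ℕ → ℝ) (hD0 : ∀ t, 0 ≤ D t) (hmono : ∀ t, D t ≤ D (t + 1))
    (hstep : ∀ t, d * K3 d l B₀ μhat * (L + (l * d * Lt) ^ 2 / 2 + 2 * D t * (l * d * Lt)) *
      Lt ^ ((d : ℝ) - 1 + μhat) ≤ D (t + 1))
    (hbig : ∀ t ≤ l, D t ^ 2 < ρ ^ 2 - L) (h0 : (0 : Fin l → ℤ) ∈ Res ω ρ L ξ)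
    (hV : V = Submodule.span ℝ (intCast '' Ups ω ρ L Lt ξ)) :
    Module.finrank ℝ V < d ∧ ∃ n : Fin (Module.finrank ℝ V) → Fin l → ℤ,
      (∀ i k, |((n i k : ℤ) : ℝ)| ≤ Lt) ∧
      Submodule.span ℝ (Set.range fun i => intCast (n i)) = V ∧
      LinearIndependent ℝ (fun i => intCast (n i)) := by
  have hle : Module.finrank ℝ V ≤ l := by simpa using Submodule.finrank_le V
  rcases Nat.eq_zero_or_pos (Module.finrank ℝ V) with hz | hz
  · refine ⟨by omega, ?_⟩
    have hb : V = ⊥ := Submodule.finrank_eq_zero.1 hz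
    have hemp : IsEmpty (Fin (Module.finrank ℝ V)) := by rw [hz]; infer_instance
    refine ⟨fun _ => 0, fun i => isEmptyElim i, ?_, linearIndependent_empty_type⟩
    rw [Set.range_eq_empty, Submodule.span_empty, hb]
  obtain ⟨t, ht⟩ := Nat.exists_eq_add_of_lt hz
  rw [zero_add] at ht
  set A := L + (l * d * Lt) ^ 2 / 2 + 2 * D t * (l * d * Lt) with hA
  have hA0 : 0 ≤ A := by have := hD0 t; positivity
  have hsub : intCast '' Ups ω ρ L Lt ξ ⊆ V := by rw [hV]; exact Submodule.subset_span
  by_cases h1 : Submodule.span ℝ (intCast '' Good ω Lt ξ V A 0) = V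
  · refine ⟨(good_lemma hd hω hB₀ hμ hl h hLt hA0 (hD0 _) (hstep t) (hbig _ (by omega)) h0 h1).1, ?_⟩
    obtain ⟨n, hn1, hn2, hn3⟩ := good_basis h1
    exact ⟨n, fun j k => (abs_le_supAbs _ k).trans (hn1 j).1.le, hn2, hn3⟩
  · exfalso
    have hlt : Submodule.span ℝ (intCast '' Good ω Lt ξ V A 0) < V :=
      lt_of_le_of_ne (Good_span_le A 0) h1
    have hf := Submodule.finrank_lt_finrank_of_lt hlt
    have hW := diam_lemma hd hω hB₀ hμ hl h hLt hL D hD0 hmono hstep hbig t (by omega) _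
      (by omega : Module.finrank ℝ (Submodule.span ℝ (intCast '' Good ω Lt ξ V A 0)) ≤ t) 0 h0
    apply hlt.not_ge
    rw [hV, Submodule.span_le, ← hV]
    rintro _ ⟨m, hm, rfl⟩
    have := Rch_mem (close_lemma hω hLt (by have := hD0 t; positivity) hA.ge rfl hW
      (Ups_Rch hsub hm))
    simpa using this

end

lemma coords_exist {l : ℕ} (s : ℕ) : ∀ V : Submodule ℝ (Fin l → ℝ), Module.finrank ℝ V ≤ s →
    ∃ I : Finset (Fin l), I.card ≤ s ∧ ∀ x ∈ V, (∀ i ∈ I, x i = 0) → x = 0 := by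
  induction s with
  | zero =>
    intro V hV
    have h2 : V = ⊥ := Submodule.finrank_eq_zero.1 (by omega)
    refine ⟨∅, by simp, ?_⟩
    intro x hx _
    rwa [h2, Submodule.mem_bot] at hx
  | succ s ih =>
    intro V hV
    by_cases hb : V = ⊥
    · refine ⟨∅, by simp, ?_⟩
      intro x hx _
      rwa [hb, Submodule.mem_bot] at hx
    obtain ⟨x, hx, hx0⟩ := Submodule.exists_mem_ne_zero_of_ne_bot hb
    obtain ⟨i, hi⟩ := Function.ne_iff.1 hx0
    have hlt : V ⊓ LinearMap.ker (LinearMap.proj i : (Fin l → ℝ) →ₗ[ℝ] ℝ) < V := by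
      refine lt_of_le_of_ne inf_le_left ?_
      intro he
      rw [← he] at hx
      exact hi (by simpa using hx.2)
    have hf := Submodule.finrank_lt_finrank_of_lt hlt
    obtain ⟨I, hI, hI2⟩ := ih _ (by omega : Module.finrank ℝ ↥(V ⊓ LinearMap.ker (LinearMap.proj i : (Fin l → ℝ) →ₗ[ℝ] ℝ)) ≤ s)
    refine ⟨insert i I, (Finset.card_insert_le _ _).trans (by omega), ?_⟩
    intro y hy hy0
    apply hI2 y ⟨hy, by simpa using hy0 i (Finset.mem_insert_self _ _)⟩
    intro j hj
    exact hy0 j (Finset.mem_insert_of_mem hj)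

lemma box_count {l s B : ℕ} (V : Submodule ℝ (Fin l → ℝ)) (hV : Module.finrank ℝ V ≤ s)
    (T : Finset (Fin l → ℤ)) (hT : ∀ m ∈ T, intCast m ∈ V)
    (hB : ∀ m ∈ T, ∀ k, |m k| ≤ (B : ℤ)) : T.card ≤ (2 * B + 1) ^ s := by
  obtain ⟨I, hI, hI2⟩ := coords_exist s V hV
  calc T.card ≤ (Fintype.piFinset (fun _ : I => Finset.Icc (-(B : ℤ)) B)).card := by
        apply Finset.card_le_card_of_injOn (fun m => fun i : I => m i)
        · intro m hm
          simp only [Finset.mem_coe, Fintype.mem_piFinset, Finset.mem_Icc]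
          intro i
          exact abs_le.1 (hB m hm i)
        · intro a ha b hb hab
          have h1 : intCast (a - b) ∈ V := by
            rw [intCast_sub]; exact V.sub_mem (hT a ha) (hT b hb)
          have h2 := hI2 _ h1 (by
            intro i hi
            have := congrFun hab ⟨i, hi⟩
            simp only at this
            simp [intCast, this])
          rw [intCast_sub, sub_eq_zero] at h2
          exact intCast_inj h2
    _ = (2 * B + 1) ^ I.card := by
        rw [Fintype.card_piFinset]
        simp
        congr 1
        omega
    _ ≤ (2 * B + 1) ^ s := Nat.pow_le_pow_right (by omega) hI

lemma vol_count {t e : ℕ} (M : Matrix (Fin (t + e)) (Fin (t + e)) ℝ) (D Q : ℝ) (hD : 0 ≤ D)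
    (hQ : 0 ≤ Q)
    (T : Finset (Fin t → ℝ))
    (hT : ∀ a ∈ T, ∀ b ∈ T, ∀ j, ∃ z : ℤ, a j - b j = z)
    (hQb : ∀ a ∈ T, ∀ f : Fin t → ℝ, (∀ j, f j ∈ Set.Ico (a j) (a j + 1)) →
      ∀ g : Fin e → ℝ, (∀ j, g j ∈ Set.Ico 0 D) → ∀ i, |M.mulVec (Fin.append f g) i| ≤ Q) :
    T.card * D ^ e * |M.det| ≤ (2 * Q) ^ (t + e) := by
  classical
  set box : (Fin t → ℝ) → Set (Fin (t + e) → ℝ) := fun a =>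
    Set.pi Set.univ (Fin.append (fun j => Set.Ico (a j) (a j + 1)) (fun _ : Fin e => Set.Ico 0 D))
    with hbox
  have hmeas : ∀ a, MeasurableSet (box a) := by
    intro a
    apply MeasurableSet.univ_pi
    intro i
    refine Fin.addCases (fun j => ?_) (fun j => ?_) i
    · simp
    · simp
  have hvol : ∀ a, volume (box a) = ENNReal.ofReal D ^ e := by
    intro a
    simp only [hbox]
    rw [MeasureTheory.volume_pi_pi, Fin.prod_univ_add]
    simp [Real.volume_Ico]
  have hdisj : (T : Set (Fin t → ℝ)).PairwiseDisjoint box := by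
    intro a ha b hb hab
    rw [Function.onFun, Set.disjoint_left]
    intro x hxa hxb
    apply hab
    ext j
    have h1 : x (Fin.castAdd e j) ∈ Set.Ico (a j) (a j + 1) := by
      simpa using hxa (Fin.castAdd e j) (Set.mem_univ _)
    have h2 : x (Fin.castAdd e j) ∈ Set.Ico (b j) (b j + 1) := by
      simpa using hxb (Fin.castAdd e j) (Set.mem_univ _)
    obtain ⟨z, hz⟩ := hT a ha b hb j
    have h3 : (z : ℝ) < 1 := by rw [← hz]; linarith [h1.1, h2.2]
    have h4 : (-1 : ℝ) < z := by rw [← hz]; linarith [h2.1, h1.2]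
    have h5 : z < 1 := by exact_mod_cast h3
    have h6 : -1 < z := by exact_mod_cast h4
    have h7 : z = 0 := by omega
    rw [h7] at hz
    simp at hz
    linarith
  have hun : volume (⋃ a ∈ T, box a) = T.card * ENNReal.ofReal D ^ e := by
    rw [MeasureTheory.measure_biUnion_finset hdisj (fun a _ => hmeas a)]
    simp [hvol]
  have himg := MeasureTheory.Measure.addHaar_image_linearMap
    (volume : Measure (Fin (t + e) → ℝ)) (Matrix.toLin' M) (⋃ a ∈ T, box a)
  have hsub : (Matrix.toLin' M) '' (⋃ a ∈ T, box a) ⊆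
      Set.pi Set.univ (fun _ : Fin (t + e) => Set.Icc (-Q) Q) := by
    rintro _ ⟨x, hx, rfl⟩
    simp only [Set.mem_iUnion] at hx
    obtain ⟨a, ha, hxa⟩ := hx
    intro i _
    have e1 : x = Fin.append (fun j => x (Fin.castAdd e j)) (fun j => x (Fin.natAdd t j)) := by
      ext i
      refine Fin.addCases (fun j => ?_) (fun j => ?_) i <;> simp
    rw [Matrix.toLin'_apply, e1]
    apply abs_le.1
    apply hQb a ha
    · intro j
      simpa using hxa (Fin.castAdd e j) (Set.mem_univ _)
    · intro j
      simpa using hxa (Fin.natAdd t j) (Set.mem_univ _)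
  have hle := MeasureTheory.measure_mono (μ := volume) hsub
  rw [himg, hun, MeasureTheory.volume_pi_pi, LinearMap.det_toLin'] at hle
  simp only [Real.volume_Icc, Finset.prod_const, Finset.card_univ, Fintype.card_fin] at hle
  rw [← ENNReal.ofReal_pow hD, ← ENNReal.ofReal_pow (by linarith), ← ENNReal.ofReal_natCast,
    ← ENNReal.ofReal_mul (by positivity), ← ENNReal.ofReal_mul (by positivity),
    ENNReal.ofReal_le_ofReal_iff (by have : 0 ≤ Q - -Q := by linarith
                                     positivity)] at hle
  calc _ = |M.det| * (T.card * D ^ e) := by ring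
    _ ≤ _ := hle
    _ = _ := by congr 1; ring

lemma count_lemma {d l t : ℕ} (hd : 1 ≤ d) {ω : Fin l → EuclideanSpace ℝ (Fin d)} {B₀ μhat : ℝ}
    (hω : ∀ j i, ω j i ∈ Set.Icc (-(1 : ℝ)/2) (1/2))
    (hB₀ : 0 < B₀) (hμ : 0 < μhat) (hl : d < l) (h : SDC d l ω B₀ μhat) (ht : t ≤ d)
    (n : Fin t → Fin l → ℤ) (hn : LinearIndependent ℝ (fun j => intCast (n j)))
    (R : ℝ) (hR1 : 1 ≤ R) (hR : ∀ j k, |((n j k : ℤ) : ℝ)| ≤ R)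
    (D₁ D : ℝ) (hD : 1 ≤ D) (hD₁ : D₁ + t * (l * d * R) ≤ D)
    (T : Finset (Fin l → ℤ))
    (hT : ∀ m ∈ T, intCast m ∈ Submodule.span ℝ (Set.range fun i => intCast (n i)))
    (hTD : ∀ m ∈ T, ‖intComb ω m‖ ≤ D₁) :
    (T.card : ℝ) ≤ ((2 * (1 + l * d * d)) ^ d * D ^ t * (d * l * R) ^ μhat / B₀) *
      ((2 * d + 1) * R) ^ t := by
  classical
  have hex : ∀ m : Fin l → ℤ, ∃ c : Fin t → ℝ, m ∈ T → ∑ j, c j • intCast (n j) = intCast m := by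
    intro m
    by_cases hm : m ∈ T
    · obtain ⟨c, hc⟩ := (Submodule.mem_span_range_iff_exists_fun ℝ).1 (hT m hm)
      exact ⟨c, fun _ => hc⟩
    · exact ⟨0, fun h => absurd h hm⟩
  choose c hc using hex
  set φ : (Fin l → ℤ) → (Fin l → ℤ) := fun m => m - ∑ j, ⌊c m j⌋ • n j with hφ
  have hφc : ∀ m ∈ T, intCast (φ m) = ∑ j, Int.fract (c m j) • intCast (n j) := by
    intro m hm
    have e1 : intCast (∑ j, ⌊c m j⌋ • n j) = ∑ j, (⌊c m j⌋ : ℝ) • intCast (n j) := by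
      ext k; simp [intCast]
    simp only [hφ]
    rw [intCast_sub, e1, ← hc m hm, ← Finset.sum_sub_distrib]
    apply Finset.sum_congr rfl
    intro j _
    rw [← sub_smul]; rfl
  have hd0 : (0 : ℝ) < d := by exact_mod_cast hd
  have hl0 : (0 : ℝ) < l := by exact_mod_cast (by omega : 0 < l)
  have htd : (t : ℝ) ≤ d := by exact_mod_cast ht
  -- number of classes
  have hcls : ((T.image φ).card : ℝ) ≤ ((2 * d + 1) * R) ^ t := by
    have h1 := box_count (B := ⌊(d : ℝ) * R⌋₊) (s := t)
      (Submodule.span ℝ (Set.range fun i => intCast (n i)))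
      (by rw [finrank_span_eq_card hn]; simp) (T.image φ) (by
        intro x hx
        obtain ⟨m, hm, rfl⟩ := Finset.mem_image.1 hx
        rw [hφc m hm]
        apply Submodule.sum_mem
        intro j _
        exact Submodule.smul_mem _ _ (Submodule.subset_span ⟨j, rfl⟩)) (by
        intro x hx k
        obtain ⟨m, hm, rfl⟩ := Finset.mem_image.1 hx
        have e1 : ((φ m k : ℤ) : ℝ) = ∑ j, Int.fract (c m j) * (n j k : ℝ) := by
          have := congrFun (hφc m hm) k
          simpa [intCast] using this
        have e2 : |((φ m k : ℤ) : ℝ)| ≤ d * R := by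
          rw [e1]
          calc _ ≤ ∑ j, |Int.fract (c m j) * (n j k : ℝ)| := Finset.abs_sum_le_sum_abs _ _
            _ ≤ ∑ j : Fin t, R := by
                apply Finset.sum_le_sum
                intro j _
                rw [abs_mul, abs_of_nonneg (Int.fract_nonneg _)]
                have h1 := Int.fract_nonneg (c m j)
                have h2 := (Int.fract_lt_one (c m j)).le
                nlinarith [hR j k, abs_nonneg (n j k : ℝ)]
            _ = t * R := by simp
            _ ≤ d * R := by gcongr
        have e3 : (φ m k).natAbs ≤ ⌊(d : ℝ) * R⌋₊ := by
          apply Nat.le_floor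
          rwa [Nat.cast_natAbs, Int.cast_abs]
        rw [Int.abs_eq_natAbs]; exact_mod_cast e3)
    have h2 : (⌊(d : ℝ) * R⌋₊ : ℝ) ≤ d * R := Nat.floor_le (by positivity)
    calc ((T.image φ).card : ℝ) ≤ ((2 * ⌊(d : ℝ) * R⌋₊ + 1 : ℕ) : ℝ) ^ t := by exact_mod_cast h1
      _ ≤ ((2 * d + 1) * R) ^ t := by
        apply pow_le_pow_left₀ (by positivity)
        push_cast
        nlinarith
  set Q := (2 * (1 + l * d * d)) ^ d * D ^ t * (d * l * R) ^ μhat / B₀ with hQ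
  have hQ0 : 0 ≤ Q := by positivity
  -- size of fibres
  have hfib : ∀ b ∈ T.image φ, {a ∈ T | φ a = b}.card ≤ ⌊Q⌋₊ := by
    intro b _
    apply Nat.le_floor
    set F := {a ∈ T | φ a = b} with hF
    have hFT : ∀ a ∈ F, a ∈ T := fun a ha => (Finset.mem_filter.1 ha).1
    have hinj : Set.InjOn c (F : Set (Fin l → ℤ)) := by
      intro x hx y hy hxy
      apply intCast_inj
      rw [← hc x (hFT x hx), ← hc y (hFT y hy), hxy]
    have hcard : (F.image c).card = F.card := Finset.card_image_of_injOn hinj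
    rw [← hcard]
    clear_value Q
    obtain ⟨e, rfl⟩ := Nat.exists_eq_add_of_le ht
    obtain ⟨w, hw, hb⟩ := ext_indep n hn e hl.le
    set N : Fin (t + e) → Fin l → ℤ := Fin.append n w with hN
    set M : Matrix (Fin (t + e)) (Fin (t + e)) ℝ :=
      Matrix.of fun i j => Om ω (intCast (N j)) i with hM
    have hdet := det_lower hd hB₀ hμ h N hw R (by
      intro j k
      refine Fin.addCases (fun j => ?_) (fun j => ?_) j
      · simpa [hN] using hR j k
      · simpa [hN] using (hb j k).trans hR1)
    rw [← hM] at hdet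
    have hv := vol_count M D ((1 + l * (t + e : ℕ) * (t + e : ℕ)) * D) (by linarith)
      (by positivity) (F.image c) (by
        intro x hx y hy j
        obtain ⟨p, hp, rfl⟩ := Finset.mem_image.1 hx
        obtain ⟨q, hq, rfl⟩ := Finset.mem_image.1 hy
        have e1 : φ p = φ q := by
          rw [(Finset.mem_filter.1 hp).2, (Finset.mem_filter.1 hq).2]
        have e2 := hφc p (hFT p hp)
        rw [e1, hφc q (hFT q hq)] at e2
        have e3 : ∑ j, (Int.fract (c q j) - Int.fract (c p j)) • intCast (n j) = 0 := by
          simp only [sub_smul, Finset.sum_sub_distrib, e2, sub_self]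
        have e4 := Fintype.linearIndependent_iff.1 hn _ e3 j
        refine ⟨⌊c p j⌋ - ⌊c q j⌋, ?_⟩
        push_cast
        unfold Int.fract at e4
        linarith) (by
        intro a ha f hf g hg i
        obtain ⟨p, hp, rfl⟩ := Finset.mem_image.1 ha
        set U : EuclideanSpace ℝ (Fin (t + e)) :=
          ∑ j, (Fin.append f g j) • Om ω (intCast (N j)) with hU
        have e1 : M.mulVec (Fin.append f g) i = U i := by
          simp [hU, hM, Matrix.mulVec, dotProduct, mul_comm]
        rw [e1]
        refine (PiLp.norm_apply_le U i).trans ?_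
        have e2 : U = intComb ω p + ∑ j, (f j - c p j) • Om ω (intCast (n j)) +
            ∑ j, g j • Om ω (intCast (w j)) := by
          rw [hU, Fin.sum_univ_add]
          simp only [hN, Fin.append_left, Fin.append_right]
          congr 1
          rw [← Om_intCast, ← hc p (hFT p hp), map_sum, ← Finset.sum_add_distrib]
          apply Finset.sum_congr rfl
          intro j _
          rw [map_smul, ← add_smul]
          congr 1; ring
        have e3 : ‖∑ j, (f j - c p j) • Om ω (intCast (n j))‖ ≤ t * (l * (t + e : ℕ) * R) := by
          calc _ ≤ ∑ j, ‖(f j - c p j) • Om ω (intCast (n j))‖ := norm_sum_le _ _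
            _ ≤ ∑ j : Fin t, (l * (t + e : ℕ) * R : ℝ) := by
              apply Finset.sum_le_sum
              intro j _
              rw [norm_smul, Real.norm_eq_abs]
              have h1 := norm_Om_le hω (intCast (n j)) R (fun k => hR j k)
              have h2 : |f j - c p j| ≤ 1 :=
                abs_le.2 ⟨by linarith [(hf j).1], by linarith [(hf j).2]⟩
              calc _ ≤ 1 * (l * (t + e : ℕ) * R : ℝ) :=
                    mul_le_mul h2 h1 (norm_nonneg _) zero_le_one
                _ = _ := one_mul _
            _ = _ := by simp
        have e4 : ‖∑ j, g j • Om ω (intCast (w j))‖ ≤ e * (D * (l * (t + e : ℕ) * 1)) := by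
          calc _ ≤ ∑ j, ‖g j • Om ω (intCast (w j))‖ := norm_sum_le _ _
            _ ≤ ∑ j : Fin e, (D * (l * (t + e : ℕ) * 1) : ℝ) := by
              apply Finset.sum_le_sum
              intro j _
              rw [norm_smul, Real.norm_eq_abs]
              have h1 := norm_Om_le hω (intCast (w j)) 1 (fun k => hb j k)
              have h2 : |g j| ≤ D :=
                abs_le.2 ⟨by linarith [(hg j).1], by linarith [(hg j).2]⟩
              exact mul_le_mul h2 h1 (norm_nonneg _) (by linarith)
            _ = _ := by simp
        have e5 := hTD p (hFT p hp)
        have e6 : ‖U‖ ≤ D₁ + t * (l * (t + e : ℕ) * R) + e * (D * (l * (t + e : ℕ) * 1)) := by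
          rw [e2]
          refine (norm_add_le _ _).trans (add_le_add ((norm_add_le _ _).trans (add_le_add e5 e3)) e4)
        have e7 : (e : ℝ) * (D * (l * (t + e : ℕ) * 1)) ≤ (t + e : ℕ) * (D * (l * (t + e : ℕ) * 1)) := by
          have : (e : ℝ) ≤ (t + e : ℕ) := by push_cast; linarith [(Nat.cast_nonneg t : (0:ℝ) ≤ t)]
          gcongr
        linarith)
    have hpos : 0 < ((t + e : ℕ) * l * R : ℝ) := by positivity
    rw [Real.rpow_neg hpos.le] at hdet
    have hX : 0 < ((t + e : ℕ) * l * R : ℝ) ^ μhat := Real.rpow_pos_of_pos hpos _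
    set X := ((t + e : ℕ) * l * R : ℝ) ^ μhat
    have hDe : 0 < D ^ e := by positivity
    have h3 : ((F.image c).card : ℝ) * D ^ e * (B₀ * X⁻¹) ≤
        (2 * ((1 + l * (t + e : ℕ) * (t + e : ℕ)) * D)) ^ (t + e) :=
      (mul_le_mul_of_nonneg_left hdet.le (by positivity)).trans hv
    rw [hQ]
    calc ((F.image c).card : ℝ) = (((F.image c).card : ℝ) * D ^ e * (B₀ * X⁻¹)) * (X / B₀ / D ^ e) := by
          field_simp
      _ ≤ (2 * ((1 + l * (t + e : ℕ) * (t + e : ℕ)) * D)) ^ (t + e) * (X / B₀ / D ^ e) := by gcongr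
      _ = _ := by
          rw [← mul_assoc, mul_pow, pow_add D]
          field_simp
  have hfin := Finset.card_le_mul_card_image T ⌊Q⌋₊ hfib
  calc (T.card : ℝ) ≤ (⌊Q⌋₊ : ℝ) * ((T.image φ).card : ℝ) := by exact_mod_cast hfin
    _ ≤ _ := by
      apply mul_le_mul (Nat.floor_le hQ0) hcls (by positivity) hQ0

set_option maxHeartbeats 2000000 in
/-- Under the SDC (with `B₀ ∈ (0,1]`, `μhat > 0`, `μ := μhat+d+1`)
there is `C = C(d,l,μhat,B₀) ≥ 1` such that for all `ρ > 0`, `L, L̃ ≥ 1`, and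
`ξ ∈ ℝ^d` with `|‖ξ‖² − ρ²| ≤ L`: if `ρ² > L + (C·L·L̃^{lμ})²` then
(i) `s := Rank Υ^ℤ_{L,L̃}(ξ) < d`; (ii) `diam Υ_{L,L̃}(ξ) ≤ C·L·L̃^{sμ}`;
(iii) `#Υ^ℤ_{L,L̃}(ξ) ≤ C·L^s·L̃^{(s²+1)μ}`. -/
theorem cluster_rank_lt (d l : ℕ) (hd : 2 ≤ d) (hl : d < l)
    (B₀ μhat : ℝ) (hB₀ : 0 < B₀) (hB₁ : B₀ ≤ 1) (hμ : 0 < μhat) :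
    ∃ C : ℝ, 1 ≤ C ∧
      ∀ ω : Fin l → EuclideanSpace ℝ (Fin d),
        (∀ j i, ω j i ∈ Set.Icc (-(1 : ℝ)/2) (1/2)) →
        SDC d l ω B₀ μhat →
        ∀ (ρ L Ltilde : ℝ) (ξ : EuclideanSpace ℝ (Fin d)),
          0 < ρ → 1 ≤ L → 1 ≤ Ltilde →
          |‖ξ‖ ^ 2 - ρ ^ 2| ≤ L →
          L + (C * L * Ltilde ^ ((l : ℝ) * (μhat + d + 1))) ^ 2 < ρ ^ 2 →
          ∀ s : ℕ,
            s = Module.finrank ℝ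
                  (Submodule.span ℝ (intCast '' Ups ω ρ L Ltilde ξ)) →
            s < d ∧
            Metric.diam ((fun m => ξ + intComb ω m) '' Ups ω ρ L Ltilde ξ) ≤
              C * L * Ltilde ^ ((s : ℝ) * (μhat + d + 1)) ∧
            (Ups ω ρ L Ltilde ξ).Finite ∧
            ((Ups ω ρ L Ltilde ξ).ncard : ℝ) ≤
              C * L ^ s * Ltilde ^ (((s ^ 2 + 1 : ℕ) : ℝ) * (μhat + d + 1)) := by
  have hd1 : (1 : ℝ) ≤ d := by exact_mod_cast (by omega : 1 ≤ d)
  have hl1 : (1 : ℝ) ≤ l := by exact_mod_cast (by omega : 1 ≤ l)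
  have hdl1 : (1 : ℝ) ≤ d * l := by nlinarith
  have hdlμ : (1 : ℝ) ≤ (d * l : ℝ) ^ μhat := Real.one_le_rpow hdl1 hμ.le
  have hK3 : 1 ≤ K3 d l B₀ μhat := by
    unfold K3
    rw [le_div_iff₀ hB₀, one_mul]
    have h1 : (1 : ℝ) ≤ d.factorial := by exact_mod_cast Nat.one_le_iff_ne_zero.2 (Nat.factorial_ne_zero d)
    have h2 : (1 : ℝ) ≤ (l : ℝ) ^ (d - 1) := one_le_pow₀ hl1
    exact hB₁.trans (one_le_mul_of_one_le_of_one_le (one_le_mul_of_one_le_of_one_le h1 h2) hdlμ)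
  obtain ⟨K, hK⟩ : ∃ K, K = d * K3 d l B₀ μhat * (1 + l * d) ^ 2 := ⟨_, rfl⟩
  have hK1 : 1 ≤ K := by
    rw [hK]
    refine one_le_mul_of_one_le_of_one_le (one_le_mul_of_one_le_of_one_le hd1 hK3) ?_
    apply one_le_pow₀
    have : (0 : ℝ) ≤ l * d := by positivity
    linarith
  obtain ⟨G, hG⟩ : ∃ G : ℝ, G = (2 * (1 + l * d * d)) ^ d * (2 + l * d * d) ^ d * K ^ (d ^ 2) *
    (d * l) ^ μhat / B₀ * (2 * d + 1) ^ d := ⟨_, rfl⟩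
  have hG0 : 0 ≤ G := by rw [hG]; positivity
  have hKl : 1 ≤ K ^ l := one_le_pow₀ hK1
  refine ⟨2 * K ^ l + G, by linarith, ?_⟩
  intro ω hω hS ρ L R ξ hρ hL hR hξ hρL s hs
  have hR0 : 0 < R := by linarith
  obtain ⟨P, hP⟩ : ∃ P, P = R ^ (μhat + d + 1) := ⟨_, rfl⟩
  have hPpow : ∀ k : ℕ, R ^ ((k : ℝ) * (μhat + d + 1)) = P ^ k := by
    intro k
    rw [hP, mul_comm, Real.rpow_mul_natCast hR0.le]
  rw [hPpow] at hρL
  rw [hPpow, hPpow]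
  have hPR : R ≤ P := by
    rw [hP]
    calc R = R ^ (1 : ℝ) := (Real.rpow_one R).symm
      _ ≤ _ := Real.rpow_le_rpow_of_exponent_le hR (by linarith)
  have hP1 : 1 ≤ P := hR.trans hPR
  have hPsplit : P = R ^ ((d : ℝ) - 1 + μhat) * R ^ 2 := by
    rw [hP, ← Real.rpow_natCast R 2, ← Real.rpow_add hR0]
    congr 1; push_cast; ring
  have hKP1 : 1 ≤ K * P := one_le_mul_of_one_le_of_one_le hK1 hP1
  obtain ⟨D, hD⟩ : ∃ D : ℕ → ℝ, D = fun t => L * (K * P) ^ t := ⟨_, rfl⟩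
  have hDL : ∀ t, L ≤ D t := by
    intro t
    rw [hD]
    have := one_le_pow₀ hKP1 (n := t)
    simp only
    nlinarith
  have hD1 : ∀ t, 1 ≤ D t := fun t => hL.trans (hDL t)
  have hD0 : ∀ t, 0 ≤ D t := fun t => zero_le_one.trans (hD1 t)
  have hDs : ∀ t, D (t + 1) = D t * (K * P) := by
    intro t; rw [hD]; simp only [pow_succ]; ring
  have hmono : ∀ t, D t ≤ D (t + 1) := by
    intro t; rw [hDs]; exact le_mul_of_one_le_right (hD0 t) hKP1
  have hstep : ∀ t, d * K3 d l B₀ μhat * (L + (l * d * R) ^ 2 / 2 + 2 * D t * (l * d * R)) *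
      R ^ ((d : ℝ) - 1 + μhat) ≤ D (t + 1) := by
    intro t
    rw [hDs, hK, hPsplit]
    have hX : 0 ≤ R ^ ((d : ℝ) - 1 + μhat) := by positivity
    have hR2 : R ≤ R ^ 2 := by nlinarith
    have hR21 : 1 ≤ R ^ 2 := one_le_pow₀ hR
    have hm : L + (l * d * R) ^ 2 / 2 + 2 * D t * (l * d * R) ≤ D t * ((1 + l * d) ^ 2 * R ^ 2) := by
      have a1 : L ≤ D t * R ^ 2 := (hDL t).trans (le_mul_of_one_le_right (hD0 t) hR21)
      have a2 : ((l : ℝ) * d * R) ^ 2 / 2 ≤ D t * ((l * d) ^ 2 * R ^ 2) := by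
        have : ((l : ℝ) * d * R) ^ 2 = (l * d) ^ 2 * R ^ 2 := by ring
        rw [this]
        have h0 : (0 : ℝ) ≤ (l * d) ^ 2 * R ^ 2 := by positivity
        nlinarith [hD1 t]
      have a3 : 2 * D t * (l * d * R) ≤ 2 * D t * (l * d * R ^ 2) := by
        have := hD0 t
        gcongr
      nlinarith
    have hc : 0 ≤ (d : ℝ) * K3 d l B₀ μhat := by positivity
    calc _ ≤ d * K3 d l B₀ μhat * (D t * ((1 + l * d) ^ 2 * R ^ 2)) * R ^ ((d : ℝ) - 1 + μhat) := by
          gcongr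
      _ = _ := by ring
  have hbig : ∀ t ≤ l, D t ^ 2 < ρ ^ 2 - L := by
    intro t ht
    have h1 : D t ≤ (2 * K ^ l + G) * L * P ^ l := by
      rw [hD]
      simp only
      have a1 : K ^ t ≤ K ^ l := pow_le_pow_right₀ hK1 ht
      have a2 : P ^ t ≤ P ^ l := pow_le_pow_right₀ hP1 ht
      have a3 : K ^ t ≤ 2 * K ^ l + G := by linarith
      calc L * (K * P) ^ t = K ^ t * L * P ^ t := by rw [mul_pow]; ring
        _ ≤ _ := by gcongr
    have h2 : D t ^ 2 ≤ ((2 * K ^ l + G) * L * P ^ l) ^ 2 := pow_le_pow_left₀ (hD0 t) h1 2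
    linarith
  have h0 : (0 : Fin l → ℤ) ∈ Res ω ρ L ξ := by
    have : intComb ω (0 : Fin l → ℤ) = 0 := by simp [intComb]
    simp only [Res, Set.mem_ofPred_eq, this, add_zero]
    exact hξ
  obtain ⟨V, hV⟩ : ∃ V, V = Submodule.span ℝ (intCast '' Ups ω ρ L R ξ) := ⟨_, rfl⟩
  rw [← hV] at hs
  have hsub : intCast '' Ups ω ρ L R ξ ⊆ V := by rw [hV]; exact Submodule.subset_span
  obtain ⟨hlt, n, hn1, hn2, hn3⟩ := rank_lemma (by omega) hω hB₀ hμ hl hS hR hL D hD0 hmono hstep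
    hbig h0 hV
  rw [← hs] at hlt
  have hdist : ∀ a ∈ Ups ω ρ L R ξ, ∀ b ∈ Ups ω ρ L R ξ, ‖intComb ω (b - a)‖ ≤ 2 * D s := by
    intro a ha b hb
    have ra := Ups_Rch hsub ha
    have rb := Ups_Rch hsub hb
    exact diam_lemma (by omega) hω hB₀ hμ hl hS hR hL D hD0 hmono hstep hbig s (by omega) V hs.ge a
      (Rch_res h0 ra) b (Relation.ReflTransGen.trans (Rch_symm ra) rb)
  have hU0 : (0 : Fin l → ℤ) ∈ Ups ω ρ L R ξ :=
    ⟨0, fun _ => 0, rfl, rfl, fun _ _ => h0, fun i hi => by omega⟩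
  refine ⟨hlt, ?_, ?_⟩
  · apply Metric.diam_le_of_forall_dist_le (by positivity)
    rintro _ ⟨a, ha, rfl⟩ _ ⟨b, hb, rfl⟩
    have h1 := hdist b hb a ha
    rw [dist_eq_norm]
    have e : ξ + intComb ω a - (ξ + intComb ω b) = intComb ω (a - b) := by
      rw [intComb_sub]; abel
    simp only [e]
    refine h1.trans ?_
    rw [hD]
    simp only
    have a1 : K ^ s ≤ K ^ l := pow_le_pow_right₀ hK1 (by omega)
    have a3 : 2 * K ^ s ≤ 2 * K ^ l + G := by linarith
    calc 2 * (L * (K * P) ^ s) = (2 * K ^ s) * L * P ^ s := by rw [mul_pow]; ring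
      _ ≤ _ := by gcongr
  · have hcount : ∀ T : Finset (Fin l → ℤ), (T : Set (Fin l → ℤ)) ⊆ Ups ω ρ L R ξ →
        (T.card : ℝ) ≤ (2 * K ^ l + G) * L ^ s * P ^ (s ^ 2 + 1) := by
      intro T hT
      have hsd : (s : ℝ) ≤ d := by exact_mod_cast hlt.le
      have key := count_lemma (by omega) hω hB₀ hμ hl hS (hs ▸ hlt.le) n hn3 R hR hn1
        (2 * D s) ((2 + l * d * d) * D s)
        (by
          have : (0 : ℝ) ≤ l * d * d := by positivity
          nlinarith [hD1 s])
        (by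
          rw [← hs]
          have : (s : ℝ) * R ≤ d * D s := by
            rcases Nat.eq_zero_or_pos s with hz | hz
            · rw [hz]; simp only [Nat.cast_zero, zero_mul]; exact mul_nonneg (by positivity) (hD0 0)
            · have h1 : R ≤ D s := by
                obtain ⟨r, hr⟩ := Nat.exists_eq_add_of_lt hz
                rw [hr, zero_add, hDs]
                calc R ≤ P := hPR
                  _ ≤ K * P := le_mul_of_one_le_left (by linarith) hK1
                  _ ≤ _ := le_mul_of_one_le_left (by linarith) (hD1 r)
              gcongr
          have h2 : (0 : ℝ) ≤ l * d := by positivity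
          nlinarith)
        T (by
          intro m hm
          rw [hn2]
          exact hsub ⟨m, hT hm, rfl⟩)
        (by
          intro m hm
          have := hdist 0 hU0 m (hT hm)
          simpa using this)
      rw [← hs] at key
      refine key.trans ?_
      have b1 : ((2 + l * d * d : ℝ) * D s) ^ s ≤ (2 + l * d * d) ^ d * (L ^ s * (K ^ (d ^ 2) * P ^ (s ^ 2))) := by
        rw [mul_pow]
        have c1 : (D s) ^ s = L ^ s * (K ^ (s ^ 2) * P ^ (s ^ 2)) := by
          rw [hD]; simp only; rw [mul_pow, ← pow_mul, mul_pow, sq]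
        rw [c1]
        have c2 : K ^ (s ^ 2) ≤ K ^ (d ^ 2) := pow_le_pow_right₀ hK1 (Nat.pow_le_pow_left hlt.le 2)
        have c3 : (2 + l * d * d : ℝ) ^ s ≤ (2 + l * d * d) ^ d :=
          pow_le_pow_right₀ (by have : (0 : ℝ) ≤ l * d * d := by positivity
                                linarith) hlt.le
        gcongr
      have b2 : ((2 * d + 1 : ℝ) * R) ^ s ≤ (2 * d + 1) ^ d * R ^ s := by
        rw [mul_pow]
        have : (2 * d + 1 : ℝ) ^ s ≤ (2 * d + 1) ^ d := pow_le_pow_right₀ (by linarith) hlt.le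
        gcongr
      have b3 : (d * l * R : ℝ) ^ μhat = (d * l) ^ μhat * R ^ μhat :=
        Real.mul_rpow (by positivity) hR0.le
      have b4 : R ^ μhat * R ^ s ≤ P := by
        rw [hP, ← Real.rpow_natCast R s, ← Real.rpow_add hR0]
        exact Real.rpow_le_rpow_of_exponent_le hR (by linarith)
      rw [b3]
      calc _ ≤ ((2 * (1 + l * d * d)) ^ d * ((2 + l * d * d) ^ d * (L ^ s * (K ^ (d ^ 2) * P ^ (s ^ 2)))) * ((d * l) ^ μhat * R ^ μhat) / B₀) * ((2 * d + 1) ^ d * R ^ s) := by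
            gcongr
        _ = G * L ^ s * P ^ (s ^ 2) * (R ^ μhat * R ^ s) := by rw [hG]; ring
        _ ≤ G * L ^ s * P ^ (s ^ 2) * P := by gcongr
        _ = G * L ^ s * P ^ (s ^ 2 + 1) := by ring
        _ ≤ _ := by
            have : G ≤ 2 * K ^ l + G := by linarith
            gcongr
    have hfin : (Ups ω ρ L R ξ).Finite := by
      by_contra hinf
      obtain ⟨T, hT, hTc⟩ := Set.Infinite.exists_subset_card_eq hinf
        (⌊(2 * K ^ l + G) * L ^ s * P ^ (s ^ 2 + 1)⌋₊ + 1)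
      have := hcount T hT
      rw [hTc] at this
      have h2 := Nat.lt_floor_add_one ((2 * K ^ l + G) * L ^ s * P ^ (s ^ 2 + 1))
      push_cast at this
      linarith
    refine ⟨hfin, ?_⟩
    have := hcount hfin.toFinset (by simp)
    rwa [← Set.ncard_eq_toFinset_card _ hfin] at this

end
end
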